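/- arXiv:1308.2656 — 5 statements merged into one kernel-verified Lean document; each statement's English description precedes it below -/
import Mathlib

section
/- Let n ∈ ℕ, let f : {0,1}^n → ℝ, and let 0 < p < r < 1. Then Var_r(E_{p/r}[f(ψ·ξ) | ψ]) ≤ (p/r)·((1−r)/(1−p))·Var_p(f). -/
/-!
Split off the first coordinate. With `M_p f` the mean of `f` over that coordinate and `D f` its
difference there, the law of total variance reads `Var_p f = Var_p (M_p f) + p (1 - p) E_p[(D f)²]`.
The operator `T f = E_{p/r}[f(ψ·ξ) | ψ]` satisfies `M_r (T f) = T (M_p f)` and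
`D (T f) = (p / r) T (D f)`. The first term is therefore handled by induction. For the second,
`E_r[(T h)²] ≤ E_p[h²]` by Jensen's inequality and the tower property, and
`r (1 - r) (p / r)² = ρ p (1 - p)`, where `ρ` is the constant in the claimed bound.
-/

open Finset Filter

namespace PartialObs

/-- Weight of a configuration `ω ∈ {0,1}^n` under the product measure `ℙ_p`. -/
noncomputable def w {n : ℕ} (p : ℝ) (ω : Fin n → Bool) : ℝ :=
  ∏ i, if ω i then p else 1 - p

/-- Expectation with respect to `ℙ_p`. -/
noncomputable def E {n : ℕ} (p : ℝ) (f : (Fin n → Bool) → ℝ) : ℝ :=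
  ∑ ω : Fin n → Bool, w p ω * f ω

/-- Variance with respect to `ℙ_p`. -/
noncomputable def Var {n : ℕ} (p : ℝ) (f : (Fin n → Bool) → ℝ) : ℝ :=
  E p (fun ω => (f ω - E p f) ^ 2)

/-- Coordinatewise product `ψ·ξ` of two configurations. -/
def prodCfg {n : ℕ} (ψ ξ : Fin n → Bool) : Fin n → Bool := fun i => ψ i && ξ i

/-- The conditional expectation `E_{p/r}[f(ψ·ξ) | ψ]`, as a function of `ψ`:
`ξ` is integrated out according to `ℙ_{p/r}`. -/
noncomputable def condExp {n : ℕ} (p r : ℝ) (f : (Fin n → Bool) → ℝ)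
    (ψ : Fin n → Bool) : ℝ :=
  E (p / r) (fun ξ => f (prodCfg ψ ξ))

section Expectation

variable {n : ℕ} {p : ℝ}

lemma w_nonneg (hp₀ : 0 ≤ p) (hp₁ : p ≤ 1) (ω : Fin n → Bool) : 0 ≤ w p ω :=
  prod_nonneg fun i _ => by split_ifs <;> linarith

variable (p)

lemma w_cons (b : Bool) (ω : Fin n → Bool) :
    w p (Fin.cons b ω : Fin (n + 1) → Bool) = (if b then p else 1 - p) * w p ω := by
  simp only [w, Fin.prod_univ_succ, Fin.cons_zero, Fin.cons_succ]

lemma sum_w : ∑ ω : Fin n → Bool, w p ω = 1 := by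
  simp only [w, ← Fintype.prod_sum (fun (_ : Fin n) (b : Bool) => if b then p else 1 - p)]
  simp

lemma E_const (c : ℝ) : E p (fun _ : Fin n → Bool => c) = c := by
  rw [E, ← sum_mul, sum_w, one_mul]

lemma E_add (f g : (Fin n → Bool) → ℝ) : E p (fun ω => f ω + g ω) = E p f + E p g := by
  simp only [E, mul_add, sum_add_distrib]

lemma E_const_mul (c : ℝ) (f : (Fin n → Bool) → ℝ) : E p (fun ω => c * f ω) = c * E p f := by
  simp only [E, mul_sum, mul_left_comm]

lemma E_sub (f g : (Fin n → Bool) → ℝ) : E p (fun ω => f ω - g ω) = E p f - E p g := by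
  simp only [E, mul_sub, sum_sub_distrib]

lemma E_fin_zero (f : (Fin 0 → Bool) → ℝ) : E p f = f default := by
  rw [E, Fintype.sum_unique, w, Fin.prod_univ_zero, one_mul]
  exact congrArg f (Subsingleton.elim _ _)

variable {p} in
lemma E_mono (hp₀ : 0 ≤ p) (hp₁ : p ≤ 1) {f g : (Fin n → Bool) → ℝ} (hfg : ∀ ω, f ω ≤ g ω) :
    E p f ≤ E p g :=
  sum_le_sum fun ω _ => mul_le_mul_of_nonneg_left (hfg ω) (w_nonneg hp₀ hp₁ ω)

lemma Var_eq_E_sq_sub_sq_E (f : (Fin n → Bool) → ℝ) :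
    Var p f = E p (fun ω => f ω ^ 2) - E p f ^ 2 := by
  have expand : ∀ ω, (f ω - E p f) ^ 2 = f ω ^ 2 - 2 * E p f * f ω + E p f ^ 2 := fun ω => by ring
  simp only [Var, expand, E_add, E_sub, E_const_mul, E_const]
  ring

lemma Var_fin_zero (f : (Fin 0 → Bool) → ℝ) : Var p f = 0 := by
  simp [Var, E_fin_zero]

variable {p} in
lemma Var_nonneg (hp₀ : 0 ≤ p) (hp₁ : p ≤ 1) (f : (Fin n → Bool) → ℝ) : 0 ≤ Var p f :=
  sum_nonneg fun ω _ => mul_nonneg (w_nonneg hp₀ hp₁ ω) (sq_nonneg _)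

variable {p} in
lemma sq_E_le_E_sq (hp₀ : 0 ≤ p) (hp₁ : p ≤ 1) (f : (Fin n → Bool) → ℝ) :
    E p f ^ 2 ≤ E p (fun ω => f ω ^ 2) :=
  sub_nonneg.mp (Var_eq_E_sq_sub_sq_E p f ▸ Var_nonneg hp₀ hp₁ f)

end Expectation

section FirstCoordinate

variable {n : ℕ}

/-- The partial expectation of `f` over its first coordinate, taken to be Bernoulli with
parameter `p`; a function of the remaining coordinates. -/
def headMean (p : ℝ) (f : (Fin (n + 1) → Bool) → ℝ) (ω : Fin n → Bool) : ℝ :=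
  (1 - p) * f (Fin.cons false ω) + p * f (Fin.cons true ω)

/-- The discrete derivative of `f` in its first coordinate, as a function of the remaining
coordinates. -/
def headDiff (f : (Fin (n + 1) → Bool) → ℝ) (ω : Fin n → Bool) : ℝ :=
  f (Fin.cons true ω) - f (Fin.cons false ω)

lemma headMean_sq (p : ℝ) (f : (Fin (n + 1) → Bool) → ℝ) (ω : Fin n → Bool) :
    headMean p (fun ω => f ω ^ 2) ω = headMean p f ω ^ 2 + p * (1 - p) * headDiff f ω ^ 2 := by
  simp only [headMean, headDiff]
  ring

lemma E_headMean (p : ℝ) (f : (Fin (n + 1) → Bool) → ℝ) : E p (headMean p f) = E p f := by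
  simp only [E, ← (Fin.consEquiv fun _ => Bool).sum_comp, Fintype.sum_prod_type, Fintype.sum_bool,
    Fin.consEquiv, Equiv.coe_fn_mk, w_cons, headMean, ← sum_add_distrib]
  exact sum_congr rfl fun ω _ => by simp only [if_true, Bool.false_eq_true, if_false]; ring

lemma Var_eq_Var_headMean_add (p : ℝ) (f : (Fin (n + 1) → Bool) → ℝ) :
    Var p f = Var p (headMean p f) + p * (1 - p) * E p (fun ω => headDiff f ω ^ 2) := by
  rw [Var_eq_E_sq_sub_sq_E, Var_eq_E_sq_sub_sq_E, ← E_headMean p fun ω => f ω ^ 2, E_headMean p f,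
    funext (headMean_sq p f), E_add, E_const_mul]
  ring

end FirstCoordinate

section CondExp

variable {n : ℕ}

lemma prodCfg_cons (b c : Bool) (ψ ξ : Fin n → Bool) :
    prodCfg (Fin.cons b ψ : Fin (n + 1) → Bool) (Fin.cons c ξ) =
      Fin.cons (b && c) (prodCfg ψ ξ) := by
  funext i
  cases i using Fin.cases <;> rfl

variable (p r : ℝ)

lemma condExp_cons_false (f : (Fin (n + 1) → Bool) → ℝ) (ψ : Fin n → Bool) :
    condExp p r f (Fin.cons false ψ) = condExp p r (fun ω => f (Fin.cons false ω)) ψ := by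
  rw [condExp, ← E_headMean]
  refine congrArg (E (p / r)) (funext fun ξ => ?_)
  simp only [headMean, prodCfg_cons, Bool.false_and]
  ring

lemma condExp_cons_true (f : (Fin (n + 1) → Bool) → ℝ) (ψ : Fin n → Bool) :
    condExp p r f (Fin.cons true ψ) = condExp p r (headMean (p / r) f) ψ := by
  rw [condExp, ← E_headMean]
  refine congrArg (E (p / r)) (funext fun ξ => ?_)
  simp only [headMean, prodCfg_cons, Bool.true_and]

lemma headDiff_condExp (f : (Fin (n + 1) → Bool) → ℝ) (ψ : Fin n → Bool) :
    headDiff (condExp p r f) ψ = p / r * condExp p r (headDiff f) ψ := by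
  rw [headDiff, condExp_cons_false, condExp_cons_true]
  simp only [condExp, headMean, headDiff, E_add, E_sub, E_const_mul]
  ring

variable {p r}

lemma headMean_condExp (hr : r ≠ 0) (f : (Fin (n + 1) → Bool) → ℝ) :
    headMean r (condExp p r f) = condExp p r (headMean p f) := by
  funext ψ
  rw [headMean, condExp_cons_false, condExp_cons_true]
  simp only [condExp, headMean, E_add, E_const_mul]
  field_simp
  ring

/-- The tower property, reflecting that `ψ·ξ` has law `ℙ_p`. -/
lemma E_condExp (hr : r ≠ 0) (f : (Fin n → Bool) → ℝ) : E r (condExp p r f) = E p f := by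
  induction n with
  | zero => rw [E_fin_zero, condExp, E_fin_zero, E_fin_zero, Subsingleton.elim (prodCfg _ _)]
  | succ n ih => rw [← E_headMean, headMean_condExp hr, ih, E_headMean]

lemma E_sq_condExp_le_E_sq (hp : 0 ≤ p) (hpr : p ≤ r) (hr₀ : r ≠ 0) (hr₁ : r ≤ 1)
    (f : (Fin n → Bool) → ℝ) :
    E r (fun ψ => condExp p r f ψ ^ 2) ≤ E p (fun ω => f ω ^ 2) := by
  have hr : 0 ≤ r := hp.trans hpr
  calc E r (fun ψ => condExp p r f ψ ^ 2)
      ≤ E r (condExp p r fun ω => f ω ^ 2) :=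
        E_mono hr hr₁ fun ψ => sq_E_le_E_sq (div_nonneg hp hr) (div_le_one_of_le₀ hpr hr) _
    _ = E p (fun ω => f ω ^ 2) := E_condExp hr₀ _

lemma Var_condExp_eq_Var_condExp_headMean_add (hr : r ≠ 0) (f : (Fin (n + 1) → Bool) → ℝ) :
    Var r (condExp p r f) = Var r (condExp p r (headMean p f)) +
      r * (1 - r) * (p / r) ^ 2 * E r (fun ψ => condExp p r (headDiff f) ψ ^ 2) := by
  rw [Var_eq_Var_headMean_add, headMean_condExp hr]
  simp only [headDiff_condExp, mul_pow, E_const_mul, mul_assoc]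

end CondExp

/-- the two-scale variance upper bound
`Var_r(E_{p/r}[f(ψ·ξ) | ψ]) ≤ (p/r)·((1−r)/(1−p))·Var_p(f)`. -/
theorem two_scale_variance_upper_bound {n : ℕ} (f : (Fin n → Bool) → ℝ)
    (p r : ℝ) (hp : 0 < p) (hpr : p < r) (hr : r < 1) :
    Var r (condExp p r f) ≤ p / r * ((1 - r) / (1 - p)) * Var p f := by
  have hr₀ : 0 < r := hp.trans hpr
  have hp₁ : 1 - p ≠ 0 := (sub_pos.mpr (hpr.trans hr)).ne'
  set ρ := p / r * ((1 - r) / (1 - p)) with hρ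
  induction n with
  | zero => simp only [Var_fin_zero, mul_zero, le_refl]
  | succ n ih =>
    have coeff_eq : r * (1 - r) * (p / r) ^ 2 = ρ * (p * (1 - p)) := by rw [hρ]; field_simp
    have coeff_nonneg : 0 ≤ r * (1 - r) * (p / r) ^ 2 :=
      mul_nonneg (mul_nonneg hr₀.le (sub_nonneg.mpr hr.le)) (sq_nonneg _)
    calc Var r (condExp p r f)
        = Var r (condExp p r (headMean p f)) +
            r * (1 - r) * (p / r) ^ 2 * E r (fun ψ => condExp p r (headDiff f) ψ ^ 2) :=
          Var_condExp_eq_Var_condExp_headMean_add hr₀.ne' f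
      _ ≤ ρ * Var p (headMean p f) +
            r * (1 - r) * (p / r) ^ 2 * E p (fun ω => headDiff f ω ^ 2) :=
          add_le_add (ih _) (mul_le_mul_of_nonneg_left
            (E_sq_condExp_le_E_sq hp.le hpr.le hr₀.ne' hr.le _) coeff_nonneg)
      _ = ρ * Var p f := by rw [Var_eq_Var_headMean_add p f, coeff_eq]; ring

end PartialObs
end

section
/- Let n ∈ ℕ, 0 < p < r < 1, f : {0,1}^n → ℝ, and define h_f : {0,1}^n → ℝ by h_f(ψ) := E_{p/r}[f(ψ·ξ) | ψ]. Then for every S ⊆ {1,…,n}, the Fourier coefficients satisfy ĥ_f^r(S) = ((p/r)·((1−r)/(1−p)))^{|S|/2} · f̂^p(S). -/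
/-!
Both Fourier coefficients integrate `f` against signed product weights: the right one against
`ℙ_p χ_S^p`, the left one against the image of `ℙ_r χ_S^r ⊗ ℙ_{p/r}` under `(ψ, ξ) ↦ ψ·ξ`.
Taking images commutes with products of weights, so it is enough to compare single coordinates.
For `i ∉ S`, Bernoulli(`r`) is thinned to Bernoulli(`p`). For `i ∈ S`, the weight `ℙ_r χ_i^r` has
mass `-√(r(1-r))` at `1` and `√(r(1-r))` at `0`; its total mass being zero, thinning multiplies
it by `p/r`, and `(p/r) √(r(1-r)) = √((p/r) (1-r)/(1-p)) √(p(1-p))`.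
-/

open Finset Filter

namespace PartialObs

/-- The character `χ_S^p(ω) = ∏_{i ∈ S} χ_i^p(ω)`, where `χ_i^p(ω) = -√((1-p)/p)`
if `ω_i = 1` and `√(p/(1-p))` if `ω_i = 0`. -/
noncomputable def chi {n : ℕ} (p : ℝ) (S : Finset (Fin n)) (ω : Fin n → Bool) : ℝ :=
  ∏ i ∈ S, if ω i then -Real.sqrt ((1 - p) / p) else Real.sqrt (p / (1 - p))

/-- The Fourier coefficient `f̂^p(S) = E_p[f · χ_S^p]`. -/
noncomputable def fourier {n : ℕ} (p : ℝ) (f : (Fin n → Bool) → ℝ)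
    (S : Finset (Fin n)) : ℝ :=
  E p (fun ω => f ω * chi p S ω)

/-- The Bernoulli(`p`) weight of the value `b` of a single coordinate. -/
noncomputable def bernoulliWeight (p : ℝ) (b : Bool) : ℝ :=
  if b then p else 1 - p

/-- The single-coordinate character `χ_i^p`, as a function of the value `b` of `ω_i`. -/
noncomputable def bernoulliChar (p : ℝ) (b : Bool) : ℝ :=
  if b then -√((1 - p) / p) else √(p / (1 - p))

/-- The factor of the signed weight `ℙ_p χ_S^p` at the coordinate `i`, as a function of the value
`b` of `ω_i`. -/
noncomputable def fourierFactor {ι : Type*} [DecidableEq ι] (p : ℝ) (S : Finset ι) (i : ι)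
    (b : Bool) : ℝ :=
  bernoulliWeight p b * if i ∈ S then bernoulliChar p b else 1

lemma sum_prod_mul_comp {ι R : Type*} {α β : ι → Type*} [Fintype ι] [DecidableEq ι]
    [∀ i, Fintype (α i)] [∀ i, Fintype (β i)] [∀ i, DecidableEq (β i)] [CommSemiring R]
    (φ : ∀ i, α i → β i) (g : ∀ i, α i → R) (f : (∀ i, β i) → R) :
    ∑ x : ∀ i, α i, (∏ i, g i (x i)) * f (fun i => φ i (x i))
      = ∑ y : ∀ i, β i, (∏ i, ∑ a with φ i a = y i, g i a) * f y := by
  rw [← sum_fiberwise univ (fun x i => φ i (x i))]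
  refine sum_congr rfl fun y _ => ?_
  have fibre_eq : ({x | (fun i => φ i (x i)) = y} : Finset (∀ i, α i))
      = Fintype.piFinset fun i => {a | φ i a = y i} := by
    ext x
    simp [funext_iff]
  rw [prod_univ_sum, sum_mul, ← fibre_eq]
  refine sum_congr rfl fun x hx => ?_
  rw [(mem_filter.mp hx).2]

lemma sum_and_fibre_mul_bernoulliWeight (u : Bool → ℝ) (q : ℝ) (c : Bool) :
    ∑ a : Bool × Bool with (a.1 && a.2) = c, u a.1 * bernoulliWeight q a.2
      = if c then u true * q else u true * (1 - q) + u false := by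
  cases c <;> simp [sum_filter, Fintype.sum_prod_type, bernoulliWeight, ← mul_add]

lemma mul_sqrt_div_self {x : ℝ} (hx : 0 ≤ x) (y : ℝ) : x * √(y / x) = √(x * y) := by
  rw [Real.sqrt_div' y hx, Real.sqrt_mul hx, mul_div_left_comm, Real.div_sqrt, mul_comm]

section SingleCoordinate

variable {p r : ℝ}

lemma bernoulliWeight_mul_bernoulliChar (hp : 0 ≤ p) (hp1 : p ≤ 1) (b : Bool) :
    bernoulliWeight p b * bernoulliChar p b
      = if b then -√(p * (1 - p)) else √(p * (1 - p)) := by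
  cases b
  · simpa [bernoulliWeight, bernoulliChar, mul_comm p] using
      mul_sqrt_div_self (sub_nonneg.mpr hp1) p
  · simpa [bernoulliWeight, bernoulliChar] using mul_sqrt_div_self hp (1 - p)

lemma sqrt_mul_sqrt_mul_one_sub (hp : 0 ≤ p) (hp1 : p < 1) (hr : 0 < r) :
    √(p / r * ((1 - r) / (1 - p))) * √(p * (1 - p)) = p / r * √(r * (1 - r)) := by
  have hp1' : 0 < 1 - p := sub_pos.mpr hp1
  have radicand_eq : p / r * ((1 - r) / (1 - p)) * (p * (1 - p)) = (p / r) ^ 2 * (r * (1 - r)) := by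
    field_simp
  rw [← Real.sqrt_mul' _ (by positivity), radicand_eq, Real.sqrt_mul (sq_nonneg _),
    Real.sqrt_sq (by positivity)]

lemma sum_and_fibre_bernoulliWeight (hr : r ≠ 0) (c : Bool) :
    ∑ a : Bool × Bool with (a.1 && a.2) = c, bernoulliWeight r a.1 * bernoulliWeight (p / r) a.2
      = bernoulliWeight p c := by
  rw [sum_and_fibre_mul_bernoulliWeight]
  cases c <;> simp [bernoulliWeight, mul_sub, mul_div_cancel₀ p hr]

lemma sum_and_fibre_bernoulliWeight_mul_bernoulliChar
    (hp : 0 ≤ p) (hp1 : p < 1) (hr : 0 < r) (hr1 : r ≤ 1) (c : Bool) :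
    ∑ a : Bool × Bool with (a.1 && a.2) = c,
        bernoulliWeight r a.1 * bernoulliChar r a.1 * bernoulliWeight (p / r) a.2
      = √(p / r * ((1 - r) / (1 - p))) * (bernoulliWeight p c * bernoulliChar p c) := by
  rw [sum_and_fibre_mul_bernoulliWeight fun b => bernoulliWeight r b * bernoulliChar r b]
  simp only [bernoulliWeight_mul_bernoulliChar hr.le hr1,
    bernoulliWeight_mul_bernoulliChar hp hp1.le, mul_ite, mul_neg,
    sqrt_mul_sqrt_mul_one_sub hp hp1 hr]
  cases c <;> simp only [Bool.false_eq_true, ↓reduceIte] <;> ring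

lemma sum_and_fibre_fourierFactor {ι : Type*} [DecidableEq ι]
    (hp : 0 ≤ p) (hp1 : p < 1) (hr : 0 < r) (hr1 : r ≤ 1) (S : Finset ι) (i : ι) (c : Bool) :
    ∑ a : Bool × Bool with (a.1 && a.2) = c,
        fourierFactor r S i a.1 * bernoulliWeight (p / r) a.2
      = (if i ∈ S then √(p / r * ((1 - r) / (1 - p))) else 1) * fourierFactor p S i c := by
  by_cases hi : i ∈ S
  · simpa only [fourierFactor, hi, if_true] using
      sum_and_fibre_bernoulliWeight_mul_bernoulliChar hp hp1 hr hr1 c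
  · simpa only [fourierFactor, hi, if_false, mul_one, one_mul] using
      sum_and_fibre_bernoulliWeight hr.ne' c

end SingleCoordinate

section Fourier

variable {n : ℕ} (p r : ℝ) (f : (Fin n → Bool) → ℝ) (S : Finset (Fin n))

lemma w_mul_chi_eq_prod_fourierFactor (ω : Fin n → Bool) :
    w p ω * chi p S ω = ∏ i, fourierFactor p S i (ω i) := by
  simp only [fourierFactor, prod_mul_distrib, Fintype.prod_ite_mem]
  rfl

lemma fourier_eq_sum_prod_fourierFactor :
    fourier p f S = ∑ ω, (∏ i, fourierFactor p S i (ω i)) * f ω := by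
  simp only [fourier, E, ← w_mul_chi_eq_prod_fourierFactor]
  exact sum_congr rfl fun ω _ => by ring

lemma fourier_condExp_eq_sum_prod :
    fourier r (condExp p r f) S
      = ∑ x : Fin n → Bool × Bool,
          (∏ i, fourierFactor r S i (x i).1 * bernoulliWeight (p / r) (x i).2)
            * f (fun i => (x i).1 && (x i).2) := by
  rw [fourier_eq_sum_prod_fourierFactor,
    ← (Equiv.arrowProdEquivProdArrow (Fin n) (fun _ => Bool) (fun _ => Bool)).symm.sum_comp,
    Fintype.sum_prod_type]
  simp only [condExp, E, mul_sum, prod_mul_distrib, mul_assoc]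
  rfl

end Fourier

/-- For `r < p`, `condExp p r` integrates against a signed weight, as `1 - p / r < 0`. -/
theorem fourier_coefficient_condExp_general
    {n : ℕ} {p r : ℝ} (hp : 0 < p) (hp1 : p < 1) (hr : 0 < r) (hr1 : r < 1)
    (f : (Fin n → Bool) → ℝ) (S : Finset (Fin n)) :
    fourier r (condExp p r f) S
      = (p / r * ((1 - r) / (1 - p))) ^ ((S.card : ℝ) / 2) * fourier p f S := by
  have ratio_nonneg : 0 ≤ p / r * ((1 - r) / (1 - p)) :=
    mul_nonneg (by positivity) (div_nonneg (sub_nonneg.mpr hr1.le) (sub_nonneg.mpr hp1.le))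
  calc fourier r (condExp p r f) S
      = ∑ ω : Fin n → Bool, (∏ i, ∑ a : Bool × Bool with (a.1 && a.2) = ω i,
          fourierFactor r S i a.1 * bernoulliWeight (p / r) a.2) * f ω := by
        rw [fourier_condExp_eq_sum_prod]
        exact sum_prod_mul_comp (fun _ (a : Bool × Bool) => a.1 && a.2)
          (fun i a => fourierFactor r S i a.1 * bernoulliWeight (p / r) a.2) f
    _ = ∑ ω, √(p / r * ((1 - r) / (1 - p))) ^ S.card
          * (∏ i, fourierFactor p S i (ω i)) * f ω := by
        simp only [sum_and_fibre_fourierFactor hp.le hp1 hr hr1.le, prod_mul_distrib,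
          Fintype.prod_ite_mem, prod_const]
    _ = (p / r * ((1 - r) / (1 - p))) ^ ((S.card : ℝ) / 2) * fourier p f S := by
        rw [Real.rpow_div_two_eq_sqrt _ ratio_nonneg, Real.rpow_natCast,
          fourier_eq_sum_prod_fourierFactor, mul_sum]
        simp only [mul_assoc]

/-- for `h_f(ψ) := E_{p/r}[f(ψ·ξ) | ψ]`,
`ĥ_f^r(S) = ((p/r)·((1−r)/(1−p)))^{|S|/2} · f̂^p(S)`. -/
theorem fourier_coefficient_condExp {n : ℕ} (p r : ℝ)
    (hp : 0 < p) (hpr : p < r) (hr : r < 1)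
    (f : (Fin n → Bool) → ℝ) (S : Finset (Fin n)) :
    fourier r (condExp p r f) S
      = (p / r * ((1 - r) / (1 - p))) ^ ((S.card : ℝ) / 2) * fourier p f S :=
  fourier_coefficient_condExp_general hp (hpr.trans hr) (hp.trans hpr) hr f S

end PartialObs
end

section
/- Let n ∈ ℕ, 0 < p < r < 1, and f : {0,1}^n → ℝ. Then Var_r(E_{p/r}[f(ψ·ξ) | ψ]) = Σ_{S ⊆ {1,…,n}, S ≠ ∅} ((p/r)·((1−r)/(1−p)))^{|S|} · f̂^p(S)². -/
/-!
Thinning maps the Fourier basis of `ℙ_p` to that of `ℙ_r` diagonally: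
`E_{p/r}[χ_S^p(ψ·ξ) | ψ] = ρ^{|S|} χ_S^r(ψ)` with `ρ² = (p/r)·((1-r)/(1-p))`. By independence of the
coordinates this concerns a single bit, where `χ_i^p = (p - ω_i) / √(p(1-p))` is the standardized
bit and averaging over `ξ_i` turns `p - ψ_i ξ_i` into `(p/r)·(r - ψ_i)`. Applied to the Fourier
expansion of `f`, the identity gives the expansion of `E_{p/r}[f(ψ·ξ) | ψ]` in the orthonormal basis
`χ_S^r` of `L²(ℙ_r)`, whose coefficients at `S ≠ ∅` have squares summing to the variance.
-/

open Finset Filter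

namespace PartialObs

/-- The one-coordinate character `χ_i^p`, as a function of the bit `ω_i`. -/
noncomputable def bitChar (p : ℝ) (b : Bool) : ℝ :=
  if b then -√((1 - p) / p) else √(p / (1 - p))

variable {n : ℕ} {p r : ℝ}

lemma E_prod (p : ℝ) (g : Fin n → Bool → ℝ) :
    E p (fun ω => ∏ i, g i (ω i)) = ∏ i, (p * g i true + (1 - p) * g i false) := by
  calc E p (fun ω => ∏ i, g i (ω i))
      = ∑ ω : Fin n → Bool, ∏ i, (if ω i then p else 1 - p) * g i (ω i) := by
        simp only [E, w, prod_mul_distrib]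
    _ = ∏ i, ∑ b : Bool, (if b then p else 1 - p) * g i b := by
        rw [prod_univ_sum, Fintype.piFinset_univ]
    _ = ∏ i, (p * g i true + (1 - p) * g i false) := by
        simp only [Fintype.sum_bool, if_true, Bool.false_eq_true, if_false]

lemma E_sum_mul {ι : Type*} (s : Finset ι) (p : ℝ) (a : ι → ℝ) (g : ι → (Fin n → Bool) → ℝ) :
    E p (fun ω => ∑ j ∈ s, a j * g j ω) = ∑ j ∈ s, a j * E p (g j) := by
  simp only [E, mul_sum, mul_left_comm (w p _)]
  exact sum_comm

lemma condExp_sum_mul {ι : Type*} (s : Finset ι) (p r : ℝ) (a : ι → ℝ)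
    (g : ι → (Fin n → Bool) → ℝ) (ψ : Fin n → Bool) :
    condExp p r (fun ω => ∑ j ∈ s, a j * g j ω) ψ = ∑ j ∈ s, a j * condExp p r (g j) ψ :=
  E_sum_mul s (p / r) a fun j ξ => g j (prodCfg ψ ξ)

lemma bitChar_eq_standardized (hp : 0 < p) (hp1 : p < 1) (b : Bool) :
    bitChar p b = (p - if b then 1 else 0) / √(p * (1 - p)) := by
  have hq : 0 < 1 - p := sub_pos.2 hp1
  have h_true : (1 - p) / p = (1 - p) ^ 2 / (p * (1 - p)) := by field_simp
  have h_false : p / (1 - p) = p ^ 2 / (p * (1 - p)) := by field_simp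
  cases b
  · rw [bitChar, if_neg Bool.false_ne_true, if_neg Bool.false_ne_true, h_false,
      Real.sqrt_div (sq_nonneg _), Real.sqrt_sq hp.le, sub_zero]
  · rw [bitChar, if_pos rfl, if_pos rfl, h_true, Real.sqrt_div (sq_nonneg _), Real.sqrt_sq hq.le,
      ← neg_div, neg_sub]

lemma bitChar_mul_bitChar (hp : 0 < p) (hp1 : p < 1) (a b : Bool) :
    bitChar p a * bitChar p b
      = (p - if a then 1 else 0) * (p - if b then 1 else 0) / (p * (1 - p)) := by
  rw [bitChar_eq_standardized hp hp1, bitChar_eq_standardized hp hp1, div_mul_div_comm,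
    Real.mul_self_sqrt (mul_pos hp (sub_pos.2 hp1)).le]

lemma mean_bitChar (hp : 0 < p) (hp1 : p < 1) :
    p * bitChar p true + (1 - p) * bitChar p false = 0 := by
  simp only [bitChar_eq_standardized hp hp1, if_true, Bool.false_eq_true, if_false]
  ring

lemma mean_bitChar_sq (hp : 0 < p) (hp1 : p < 1) :
    p * bitChar p true ^ 2 + (1 - p) * bitChar p false ^ 2 = 1 := by
  have hq : 0 < 1 - p := sub_pos.2 hp1
  simp only [sq, bitChar_mul_bitChar hp hp1, if_true, Bool.false_eq_true, if_false]
  field_simp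
  ring

lemma bit_reproducing_kernel (hp : 0 < p) (hp1 : p < 1) (a b : Bool) :
    (if a then p else 1 - p) * (1 + bitChar p a * bitChar p b) = if a = b then 1 else 0 := by
  have hq : 0 < 1 - p := sub_pos.2 hp1
  rw [bitChar_mul_bitChar hp hp1]
  cases a <;> cases b <;>
    simp only [if_true, Bool.false_eq_true, Bool.true_eq_false, if_false] <;> field_simp <;> ring

/-- The factor `ρ` by which thinning from density `r` to density `p` scales a one-bit character:
`E_{p/r}[χ_i^p(ψ·ξ) | ψ] = ρ χ_i^r(ψ)`. -/
noncomputable def thinFactor (p r : ℝ) : ℝ := √(p / r * ((1 - r) / (1 - p)))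

lemma thinFactor_sq (hp : 0 ≤ p) (hp1 : p ≤ 1) (hr : 0 ≤ r) (hr1 : r ≤ 1) :
    thinFactor p r ^ 2 = p / r * ((1 - r) / (1 - p)) :=
  Real.sq_sqrt <|
    mul_nonneg (div_nonneg hp hr) (div_nonneg (sub_nonneg.2 hr1) (sub_nonneg.2 hp1))

lemma thinFactor_eq (hp : 0 < p) (hp1 : p < 1) (hr : 0 < r) (hr1 : r < 1) :
    thinFactor p r = p / r * (√(r * (1 - r)) / √(p * (1 - p))) := by
  have hq : 0 < 1 - p := sub_pos.2 hp1
  have hs : 0 < 1 - r := sub_pos.2 hr1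
  have h_sq : p / r * ((1 - r) / (1 - p)) = (p / r) ^ 2 * (r * (1 - r) / (p * (1 - p))) := by
    field_simp
  rw [thinFactor, h_sq, Real.sqrt_mul (sq_nonneg _), Real.sqrt_sq (by positivity),
    Real.sqrt_div (by positivity)]

lemma thin_bitChar (hp : 0 < p) (hp1 : p < 1) (hr : 0 < r) (hr1 : r < 1) (c : Bool) :
    p / r * bitChar p (c && true) + (1 - p / r) * bitChar p (c && false)
      = thinFactor p r * bitChar r c := by
  have hσ : 0 < √(r * (1 - r)) := Real.sqrt_pos.2 (mul_pos hr (sub_pos.2 hr1))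
  simp only [Bool.and_true, Bool.and_false, bitChar_eq_standardized hp hp1,
    bitChar_eq_standardized hr hr1, thinFactor_eq hp hp1 hr hr1, Bool.false_eq_true, if_false]
  field_simp
  ring

lemma chi_eq_prod_ite (p : ℝ) (S : Finset (Fin n)) (ω : Fin n → Bool) :
    chi p S ω = ∏ i, if i ∈ S then bitChar p (ω i) else 1 :=
  (Fintype.prod_ite_mem S fun i => bitChar p (ω i)).symm

lemma chi_empty (p : ℝ) (ω : Fin n → Bool) : chi p ∅ ω = 1 := prod_empty

lemma E_chi_mul_chi (hp : 0 < p) (hp1 : p < 1) (S T : Finset (Fin n)) :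
    E p (fun ω => chi p S ω * chi p T ω) = if S = T then 1 else 0 := by
  have factor (i : Fin n) :
      p * ((if i ∈ S then bitChar p true else 1) * if i ∈ T then bitChar p true else 1)
        + (1 - p) * ((if i ∈ S then bitChar p false else 1) * if i ∈ T then bitChar p false else 1)
      = if i ∈ S ↔ i ∈ T then 1 else 0 := by
    by_cases hS : i ∈ S <;> by_cases hT : i ∈ T <;>
      simp [hS, hT, ← sq, mean_bitChar hp hp1, mean_bitChar_sq hp hp1]
  simp only [chi_eq_prod_ite, ← prod_mul_distrib]
  rw [E_prod p fun i b =>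
    (if i ∈ S then bitChar p b else 1) * if i ∈ T then bitChar p b else 1]
  simp only [factor, prod_boole, mem_univ, true_imp_iff, Finset.ext_iff]

lemma E_chi (hp : 0 < p) (hp1 : p < 1) (S : Finset (Fin n)) :
    E p (chi p S) = if S = ∅ then 1 else 0 := by
  simpa only [chi_empty, mul_one] using E_chi_mul_chi hp hp1 S ∅

lemma w_mul_sum_chi_mul_chi (hp : 0 < p) (hp1 : p < 1) (η ω : Fin n → Bool) :
    w p η * ∑ S, chi p S η * chi p S ω = if η = ω then 1 else 0 := by
  calc w p η * ∑ S, chi p S η * chi p S ω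
      = w p η * ∏ i, (1 + bitChar p (η i) * bitChar p (ω i)) := by
        rw [prod_one_add, powerset_univ]
        exact congrArg _ (sum_congr rfl fun S _ => prod_mul_distrib.symm)
    _ = ∏ i, if η i = ω i then 1 else 0 := by
        simp only [w, ← prod_mul_distrib, bit_reproducing_kernel hp hp1]
    _ = if η = ω then 1 else 0 := by
        simp only [prod_boole, mem_univ, true_imp_iff, funext_iff]

lemma sum_fourier_mul_chi (hp : 0 < p) (hp1 : p < 1) (f : (Fin n → Bool) → ℝ)
    (ω : Fin n → Bool) :
    ∑ S, fourier p f S * chi p S ω = f ω := by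
  calc ∑ S, fourier p f S * chi p S ω
      = ∑ η, f η * (w p η * ∑ S, chi p S η * chi p S ω) := by
        simp only [fourier, E, sum_mul, mul_sum]
        rw [sum_comm]
        exact sum_congr rfl fun η _ => sum_congr rfl fun S _ => by ring
    _ = f ω := by
        simp only [w_mul_sum_chi_mul_chi hp hp1, mul_ite, mul_one, mul_zero, sum_ite_eq', mem_univ,
          if_true]

lemma E_sq_sum_chi (hp : 0 < p) (hp1 : p < 1) (s : Finset (Finset (Fin n)))
    (a : Finset (Fin n) → ℝ) :
    E p (fun ω => (∑ S ∈ s, a S * chi p S ω) ^ 2) = ∑ S ∈ s, a S ^ 2 := by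
  calc E p (fun ω => (∑ S ∈ s, a S * chi p S ω) ^ 2)
      = E p (fun ω => ∑ x ∈ s ×ˢ s, a x.1 * a x.2 * (chi p x.1 ω * chi p x.2 ω)) := by
        simp only [sq, sum_mul_sum, sum_product, mul_mul_mul_comm]
    _ = ∑ S ∈ s, ∑ T ∈ s, a S * a T * if S = T then 1 else 0 := by
        rw [E_sum_mul (s ×ˢ s) p (fun x => a x.1 * a x.2) fun x ω => chi p x.1 ω * chi p x.2 ω]
        simp only [E_chi_mul_chi hp hp1, sum_product]
    _ = ∑ S ∈ s, a S ^ 2 := by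
        refine sum_congr rfl fun S hS => ?_
        simp only [mul_ite, mul_one, mul_zero, sum_ite_eq, if_pos hS, sq]

lemma Var_sum_chi (hp : 0 < p) (hp1 : p < 1) (a : Finset (Fin n) → ℝ) :
    Var p (fun ω => ∑ S, a S * chi p S ω) = ∑ S with S ≠ ∅, a S ^ 2 := by
  have mean : E p (fun ω => ∑ S, a S * chi p S ω) = a ∅ := by
    simp only [E_sum_mul, E_chi hp hp1, mul_ite, mul_one, mul_zero, sum_ite_eq', mem_univ, if_true]
  have centered (ω : Fin n → Bool) :
      ∑ S, a S * chi p S ω - a ∅ = ∑ S with S ≠ ∅, a S * chi p S ω := by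
    rw [filter_ne', ← sum_erase_add _ _ (mem_univ ∅), chi_empty, mul_one, add_sub_cancel_right]
  simp only [Var, mean, centered, E_sq_sum_chi hp hp1]

lemma condExp_chi (hp : 0 < p) (hp1 : p < 1) (hr : 0 < r) (hr1 : r < 1) (S : Finset (Fin n))
    (ψ : Fin n → Bool) :
    condExp p r (chi p S) ψ = thinFactor p r ^ #S * chi r S ψ := by
  calc condExp p r (chi p S) ψ
      = E (p / r) (fun ξ => ∏ i, if i ∈ S then bitChar p (ψ i && ξ i) else 1) := by
        simp only [condExp, chi_eq_prod_ite, prodCfg]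
    _ = ∏ i, if i ∈ S then thinFactor p r * bitChar r (ψ i) else 1 := by
        rw [E_prod (p / r) fun i b => if i ∈ S then bitChar p (ψ i && b) else 1]
        refine prod_congr rfl fun i _ => ?_
        split_ifs
        · exact thin_bitChar hp hp1 hr hr1 (ψ i)
        · ring
    _ = thinFactor p r ^ #S * chi r S ψ := by
        rw [Fintype.prod_ite_mem, prod_mul_distrib, prod_const]
        rfl

lemma condExp_eq_sum_chi (hp : 0 < p) (hp1 : p < 1) (hr : 0 < r) (hr1 : r < 1)
    (f : (Fin n → Bool) → ℝ) (ψ : Fin n → Bool) :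
    condExp p r f ψ = ∑ S, fourier p f S * thinFactor p r ^ #S * chi r S ψ := by
  calc condExp p r f ψ
      = condExp p r (fun ω => ∑ S, fourier p f S * chi p S ω) ψ := by
        simp only [sum_fourier_mul_chi hp hp1]
    _ = ∑ S, fourier p f S * condExp p r (chi p S) ψ :=
        condExp_sum_mul univ p r (fourier p f) (chi p) ψ
    _ = ∑ S, fourier p f S * thinFactor p r ^ #S * chi r S ψ := by
        simp only [condExp_chi hp hp1 hr hr1, mul_assoc]

/-- For `r < p` the weights of `ℙ_{p/r}` are signed and `condExp p r` is the inverse of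
`condExp r p`. -/
theorem two_scale_variance_formula_general (hp : 0 < p) (hp1 : p < 1) (hr : 0 < r) (hr1 : r < 1)
    (f : (Fin n → Bool) → ℝ) :
    Var r (condExp p r f)
      = ∑ S with S ≠ ∅, (p / r * ((1 - r) / (1 - p))) ^ #S * fourier p f S ^ 2 := by
  rw [funext (condExp_eq_sum_chi hp hp1 hr hr1 f), Var_sum_chi hr hr1]
  refine sum_congr rfl fun S _ => ?_
  rw [mul_pow, pow_right_comm, thinFactor_sq hp.le hp1.le hr.le hr1.le, mul_comm]

/-- `Var_r(E_{p/r}[f(ψ·ξ) | ψ]) = Σ_{S ≠ ∅} ((p/r)·((1−r)/(1−p)))^{|S|} f̂^p(S)²`. -/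
theorem two_scale_variance_formula {n : ℕ} (p r : ℝ)
    (hp : 0 < p) (hpr : p < r) (hr : r < 1)
    (f : (Fin n → Bool) → ℝ) :
    Var r (condExp p r f)
      = ∑ S ∈ Finset.univ.filter (fun S : Finset (Fin n) => S ≠ ∅),
          (p / r * ((1 - r) / (1 - p))) ^ S.card * fourier p f S ^ 2 :=
  two_scale_variance_formula_general hp (hpr.trans hr) (hp.trans hpr) hr f

end PartialObs
end

section
/- Let n ∈ ℕ, p ∈ (0,1), ε ∈ (0,1), and set r = p/(1 − ε(1−p)). Let ψ ∈ {0,1}^n be distributed according to ℙ_r, and let ξ and ξ' be independent, each distributed according to ℙ_{p/r} and independent of ψ. Then the pair (ψ·ξ, ψ·ξ') has the same joint distribution as (ω, ω^ε), where ω is distributed according to ℙ_p and ω^ε is its ε-noised version. -/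
/-!
Both laws are products over the coordinates. In one coordinate, with `q = p / r = 1 - ε (1 - p)`,
the pair `(ψ·ξ, ψ·ξ')` consists of two independent Bernoulli(`q`) variables if `ψ = 1` and is
`(0,0)` if `ψ = 0`. A law on `{0,1}²` is determined by its marginals and its mass at `(1,1)`: here
the marginals are Bernoulli(`r q`), with `r q = p`, and the mass at `(1,1)` is
`r q² = p q = p (1 - ε + ε p)`, exactly as for a bit and its `ε`-noised version.
-/

open Finset Filter

namespace PartialObs

/-- Joint probability mass of the pair `(ω, ω^ε)` at `(a, b)`, where `ω ∼ ℙ_p` and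
`ω^ε` is obtained from `ω` by independently resampling each coordinate with
probability `ε` (the resampled value being `1` with probability `p`). -/
noncomputable def pairW {n : ℕ} (p ε : ℝ) (a b : Fin n → Bool) : ℝ :=
  ∏ i, (if a i then p else 1 - p) *
    ((1 - ε) * (if a i = b i then 1 else 0) + ε * (if b i then p else 1 - p))

/-- Expectation `E_p[F(ω, ω^ε)]` over the joint law of `(ω, ω^ε)`. -/
noncomputable def E2 {n : ℕ} (p ε : ℝ)
    (F : (Fin n → Bool) → (Fin n → Bool) → ℝ) : ℝ :=
  ∑ a : Fin n → Bool, ∑ b : Fin n → Bool, pairW p ε a b * F a b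

/-- The quantity `E_p[f(ω) f(ω^ε)] − E_p[f(ω)]²`. -/
noncomputable def noiseCov {n : ℕ} (p ε : ℝ) (f : (Fin n → Bool) → ℝ) : ℝ :=
  E2 p ε (fun a b => f a * f b) - (E p f) ^ 2

/-- Noise sensitivity at intensity `p`: for every `ε ∈ (0,1)`,
`E_p[f_n(ω) f_n(ω^ε)] − E_p[f_n(ω)]² → 0` as `n → ∞`. -/
def NS (p : ℝ) (f : ∀ n, (Fin n → Bool) → ℝ) : Prop :=
  ∀ ε ∈ Set.Ioo (0 : ℝ) 1,
    Tendsto (fun n => noiseCov p ε (f n)) atTop (nhds 0)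

theorem sum_sum_sum_prod_eq_prod_sum_sum_sum {ι R : Type*} [Fintype ι] [DecidableEq ι]
    [CommSemiring R] {α β γ : ι → Type*} [∀ i, Fintype (α i)] [∀ i, Fintype (β i)]
    [∀ i, Fintype (γ i)] (f : ∀ i, α i → β i → γ i → R) :
    ∑ x : ∀ i, α i, ∑ y : ∀ i, β i, ∑ z : ∀ i, γ i, ∏ i, f i (x i) (y i) (z i) =
      ∏ i, ∑ x, ∑ y, ∑ z, f i x y z := by
  simp only [Fintype.prod_sum]

theorem ite_eq_and_eq_eq_prod {ι R : Type*} [Fintype ι] [CommMonoidWithZero R] {α β : ι → Type*}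
    [∀ i, DecidableEq (α i)] [∀ i, DecidableEq (β i)] (x a : ∀ i, α i) (y b : ∀ i, β i) :
    (if x = a ∧ y = b then (1 : R) else 0) =
      ∏ i, if x i = a i ∧ y i = b i then (1 : R) else 0 := by
  simp only [Fintype.prod_boole, funext_iff, forall_and]

section OneCoordinate

variable {R : Type*} [CommRing R]

/-- Mass that the Bernoulli law of parameter `p` gives to a bit, `true` encoding the value `1`.
The parameter ranges over a commutative ring and need not be a probability. -/
def bernoulliMass (p : R) (s : Bool) : R :=
  if s then p else 1 - p

/-- Mass at `(s, t)` of the joint law of a Bernoulli(`p`) bit and its `ε`-noised version: the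
one-coordinate factor of `pairW`. -/
def noisyPairMass (p ε : R) (s t : Bool) : R :=
  bernoulliMass p s * ((1 - ε) * (if s = t then 1 else 0) + ε * bernoulliMass p t)

/-- Mass at `(s, t)` of the mixture that is, with probability `r`, a pair of independent bits of
parameters `q` and `q'`, and is `(0, 0)` otherwise. -/
def maskedPairMass (r q q' : R) (s t : Bool) : R :=
  r * (bernoulliMass q s * bernoulliMass q' t) +
    (1 - r) * (if s = false ∧ t = false then 1 else 0)

theorem sum_bernoulliMass_mul_ite_and_eq (r q q' : R) (s t : Bool) :
    ∑ x, ∑ y, ∑ z, bernoulliMass r x * bernoulliMass q y * bernoulliMass q' z *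
        (if (x && y) = s ∧ (x && z) = t then 1 else 0) =
      maskedPairMass r q q' s t := by
  cases s <;> cases t <;> simp [bernoulliMass, maskedPairMass] <;> ring

theorem maskedPairMass_eq_noisyPairMass {p ε r q : R} (hq : q = 1 - ε * (1 - p))
    (hrq : r * q = p) (s t : Bool) :
    maskedPairMass r q q s t = noisyPairMass p ε s t := by
  have mass_one_one : r * (q * q) = p * (1 - ε + ε * p) := by
    linear_combination q * hrq + p * hq
  have mass_one_zero : r * (q * (1 - q)) = p * (ε * (1 - p)) := by
    linear_combination (1 - q) * hrq - p * hq
  have mass_zero_one : r * ((1 - q) * q) = (1 - p) * (ε * p) := by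
    linear_combination mass_one_zero
  have mass_zero_zero :
      r * ((1 - q) * (1 - q)) + (1 - r) = (1 - p) * (1 - ε + ε * (1 - p)) := by
    linear_combination mass_one_one - 2 * hrq
  cases s <;> cases t <;> simpa [bernoulliMass, maskedPairMass, noisyPairMass]

end OneCoordinate

section Configurations

variable {n : ℕ}

theorem w_eq_prod_bernoulliMass (p : ℝ) (ω : Fin n → Bool) :
    w p ω = ∏ i, bernoulliMass p (ω i) :=
  rfl

theorem pairW_eq_prod_noisyPairMass (p ε : ℝ) (a b : Fin n → Bool) :
    pairW p ε a b = ∏ i, noisyPairMass p ε (a i) (b i) :=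
  rfl

theorem sum_w_mul_ite_prodCfg_eq_prod_maskedPairMass (r q q' : ℝ) (a b : Fin n → Bool) :
    ∑ ψ : Fin n → Bool, ∑ ξ : Fin n → Bool, ∑ ξ' : Fin n → Bool,
        w r ψ * w q ξ * w q' ξ' * (if prodCfg ψ ξ = a ∧ prodCfg ψ ξ' = b then (1 : ℝ) else 0) =
      ∏ i, maskedPairMass r q q' (a i) (b i) := by
  simp only [w_eq_prod_bernoulliMass, ite_eq_and_eq_eq_prod, prodCfg, ← prod_mul_distrib,
    ← sum_bernoulliMass_mul_ite_and_eq]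
  exact sum_sum_sum_prod_eq_prod_sum_sum_sum fun i x y z =>
    bernoulliMass r x * bernoulliMass q y * bernoulliMass q' z *
      (if (x && y) = a i ∧ (x && z) = b i then 1 else 0)

theorem joint_law_prod_eq_noise_general {p ε r q : ℝ} (hq : q = 1 - ε * (1 - p))
    (hrq : r * q = p) (a b : Fin n → Bool) :
    ∑ ψ : Fin n → Bool, ∑ ξ : Fin n → Bool, ∑ ξ' : Fin n → Bool,
        w r ψ * w q ξ * w q ξ' * (if prodCfg ψ ξ = a ∧ prodCfg ψ ξ' = b then (1 : ℝ) else 0) =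
      pairW p ε a b := by
  rw [sum_w_mul_ite_prodCfg_eq_prod_maskedPairMass, pairW_eq_prod_noisyPairMass]
  exact prod_congr rfl fun i _ => maskedPairMass_eq_noisyPairMass hq hrq (a i) (b i)

end Configurations

/-- with `r = p/(1 − ε(1−p))`, the pair `(ψ·ξ, ψ·ξ')` (with
`ψ ∼ ℙ_r` and `ξ, ξ' ∼ ℙ_{p/r}` independent) has the same joint distribution
as `(ω, ω^ε)` with `ω ∼ ℙ_p`: the two joint probability mass functions agree. -/
theorem joint_law_prod_eq_noise {n : ℕ} (p ε : ℝ)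
    (hp : p ∈ Set.Ioo (0 : ℝ) 1) (hε : ε ∈ Set.Ioo (0 : ℝ) 1)
    (r : ℝ) (hr : r = p / (1 - ε * (1 - p)))
    (a b : Fin n → Bool) :
    (∑ ψ : Fin n → Bool, ∑ ξ : Fin n → Bool, ∑ ξ' : Fin n → Bool,
      w r ψ * w (p / r) ξ * w (p / r) ξ' *
        (if prodCfg ψ ξ = a ∧ prodCfg ψ ξ' = b then (1 : ℝ) else 0))
      = pairW p ε a b := by
  have hq : p / r = 1 - ε * (1 - p) := by rw [hr, div_div_cancel₀ hp.1.ne']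
  have hq_pos : 0 < 1 - ε * (1 - p) := by nlinarith [hp.1, hp.2, hε.1, hε.2]
  exact joint_law_prod_eq_noise_general hq (by rw [hq, hr, div_mul_cancel₀ _ hq_pos.ne']) a b

end PartialObs
end

section
/- Let n ∈ ℕ, p ∈ (0,1), ε ∈ (0,1), and set r = p/(1 − ε(1−p)). Then for every f : {0,1}^n → ℝ, E_p[f(ω) f(ω^ε)] = E_r[(E_{p/r}[f(ψ·ξ) | ψ])²]. -/
/-!
Expanding the square, the right-hand side is `E[f(ψ·ξ) f(ψ·η)]` with `ξ, η` two independent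
copies given `ψ`, so it suffices that `(ψ·ξ, ψ·η)` has the law of `(ω, ω^ε)`. Both laws are
products over the coordinates, and in one coordinate this is a check of four entries, with
`p / r = 1 - ε (1 - p)`: for instance, both values are `1` with probability
`r (p / r)² = p (1 - ε (1 - p))`.
-/

open Finset Filter

namespace PartialObs

section ProductWeights

variable {ι : Type*} [Fintype ι] [DecidableEq ι]

lemma sum_arrow_prod {α β M : Type*} [Fintype α] [Fintype β] [AddCommMonoid M]
    (G : (ι → α) → (ι → β) → M) :
    ∑ x : ι → α × β, G (fun i => (x i).1) (fun i => (x i).2) = ∑ a, ∑ b, G a b := by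
  rw [← Fintype.sum_prod_type']
  exact (Equiv.arrowProdEquivProdArrow ι (fun _ => α) (fun _ => β)).sum_comp
    fun ab => G ab.1 ab.2

lemma sum_prod_mul_comp_eq_sum_prod_fiber {α β : ι → Type*} {R : Type*} [CommSemiring R]
    [∀ i, Fintype (α i)] [∀ i, Fintype (β i)] [∀ i, DecidableEq (β i)]
    (φ : ∀ i, α i → R) (g : ∀ i, α i → β i) (F : (∀ i, β i) → R) :
    ∑ x : ∀ i, α i, (∏ i, φ i (x i)) * F (fun i => g i (x i)) =
      ∑ y : ∀ i, β i, (∏ i, ∑ a with g i a = y i, φ i a) * F y := by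
  rw [← sum_fiberwise univ (fun x i => g i (x i))]
  refine sum_congr rfl fun y _ => ?_
  have fiber_eq_piFinset : ({x | (fun i => g i (x i)) = y} : Finset (∀ i, α i)) =
      Fintype.piFinset fun i => {a | g i a = y i} := by
    ext x
    simp [funext_iff]
  rw [prod_univ_sum, sum_mul, ← fiber_eq_piFinset]
  refine sum_congr rfl fun x hx => ?_
  rw [(mem_filter.mp hx).2]

end ProductWeights

/-- The one-coordinate weight of `ℙ_p`: mass `p` at `1` and `1 - p` at `0`. -/
def bitW (p : ℝ) (x : Bool) : ℝ := if x then p else 1 - p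

/-- The joint law of one coordinate of `(ω, ω^ε)`. -/
def pairBitW (p ε : ℝ) (x : Bool × Bool) : ℝ :=
  bitW p x.1 * ((1 - ε) * (if x.1 = x.2 then 1 else 0) + ε * bitW p x.2)

lemma sum_bitW_fiber_and_eq_pairBitW {p ε r s : ℝ} (hrs : r * s = p)
    (hs : s = 1 - ε * (1 - p)) (y : Bool × Bool) :
    ∑ x : Bool × Bool × Bool with (x.1 && x.2.1, x.1 && x.2.2) = y,
      bitW r x.1 * (bitW s x.2.1 * bitW s x.2.2) = pairBitW p ε y := by
  obtain ⟨a, b⟩ := y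
  cases a <;> cases b <;>
    simp only [sum_filter, Fintype.sum_prod_type, Fintype.sum_bool, pairBitW, bitW, Prod.mk.injEq,
      Bool.true_and, Bool.false_and, Bool.false_eq_true, Bool.true_eq_false, and_true, and_false,
      and_self, if_true, if_false]
  · linear_combination (s - 2) * hrs + p * hs
  · linear_combination (1 - s) * hrs - p * hs
  · linear_combination (1 - s) * hrs - p * hs
  · linear_combination s * hrs + p * hs

variable {n : ℕ}

lemma E2_eq_sum_prod_pairBitW (p ε : ℝ) (F : (Fin n → Bool) → (Fin n → Bool) → ℝ) :
    E2 p ε F = ∑ y : Fin n → Bool × Bool,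
      (∏ i, pairBitW p ε (y i)) * F (fun i => (y i).1) (fun i => (y i).2) :=
  (sum_arrow_prod fun a b => pairW p ε a b * F a b).symm

lemma E_E_E_eq_sum_prod_bitW (p q r : ℝ)
    (G : (Fin n → Bool) → (Fin n → Bool) → (Fin n → Bool) → ℝ) :
    (E p fun a => E q fun b => E r fun c => G a b c) =
      ∑ x : Fin n → Bool × Bool × Bool,
        (∏ i, bitW p (x i).1 * (bitW q (x i).2.1 * bitW r (x i).2.2)) *
          G (fun i => (x i).1) (fun i => (x i).2.1) (fun i => (x i).2.2) := by
  let H (a b c : Fin n → Bool) : ℝ :=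
    (∏ i, bitW p (a i) * (bitW q (b i) * bitW r (c i))) * G a b c
  calc (E p fun a => E q fun b => E r fun c => G a b c)
      = ∑ a, ∑ b, ∑ c, H a b c := by
        simp only [E, w, H, bitW, prod_mul_distrib, mul_sum, mul_assoc]
    _ = ∑ a, ∑ z : Fin n → Bool × Bool, H a (fun i => (z i).1) (fun i => (z i).2) :=
        sum_congr rfl fun a _ => (sum_arrow_prod (H a)).symm
    _ = ∑ x : Fin n → Bool × Bool × Bool,
          H (fun i => (x i).1) (fun i => (x i).2.1) (fun i => (x i).2.2) :=
        (sum_arrow_prod fun a (z : Fin n → Bool × Bool) =>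
          H a (fun i => (z i).1) (fun i => (z i).2)).symm

lemma E2_eq_E_prodCfg_prodCfg {p ε r s : ℝ} (hrs : r * s = p) (hs : s = 1 - ε * (1 - p))
    (F : (Fin n → Bool) → (Fin n → Bool) → ℝ) :
    E2 p ε F = E r fun ψ => E s fun ξ => E s fun η => F (prodCfg ψ ξ) (prodCfg ψ η) := by
  rw [E2_eq_sum_prod_pairBitW, E_E_E_eq_sum_prod_bitW]
  simp_rw [← sum_bitW_fiber_and_eq_pairBitW hrs hs]
  exact (sum_prod_mul_comp_eq_sum_prod_fiber
    (α := fun _ => Bool × Bool × Bool) (β := fun _ => Bool × Bool)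
    (fun _ x => bitW r x.1 * (bitW s x.2.1 * bitW s x.2.2))
    (fun _ x => (x.1 && x.2.1, x.1 && x.2.2))
    fun y => F (fun i => (y i).1) (fun i => (y i).2)).symm

lemma E_E_mul (p q : ℝ) (f g : (Fin n → Bool) → ℝ) :
    (E p fun ξ => E q fun η => f ξ * g η) = E p f * E q g := by
  simp only [E, sum_mul_sum]
  refine sum_congr rfl fun ξ _ => ?_
  rw [mul_sum]
  exact sum_congr rfl fun η _ => by ring

theorem noise_correlation_eq_second_moment_general {p ε r : ℝ} (hp : p ≠ 0)
    (hε : 1 - ε * (1 - p) ≠ 0) (hr : r = p / (1 - ε * (1 - p))) (f g : (Fin n → Bool) → ℝ) :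
    E2 p ε (fun a b => f a * g b) = E r fun ψ => condExp p r f ψ * condExp p r g ψ := by
  have hr0 : r ≠ 0 := hr ▸ div_ne_zero hp hε
  have hs : p / r = 1 - ε * (1 - p) := by rw [hr, div_div_cancel₀ hp]
  rw [E2_eq_E_prodCfg_prodCfg (mul_div_cancel₀ p hr0) hs]
  simp only [condExp, E_E_mul]

/-- with `r = p/(1 − ε(1−p))`,
`E_p[f(ω) f(ω^ε)] = E_r[(E_{p/r}[f(ψ·ξ) | ψ])²]`. -/
theorem noise_correlation_eq_second_moment {n : ℕ} (p ε : ℝ)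
    (hp : p ∈ Set.Ioo (0 : ℝ) 1) (hε : ε ∈ Set.Ioo (0 : ℝ) 1)
    (r : ℝ) (hr : r = p / (1 - ε * (1 - p)))
    (f : (Fin n → Bool) → ℝ) :
    E2 p ε (fun a b => f a * f b) = E r (fun ψ => (condExp p r f ψ) ^ 2) := by
  have hε' : 1 - ε * (1 - p) ≠ 0 := by nlinarith [hp.1, hp.2, hε.1, hε.2]
  simpa only [sq] using noise_correlation_eq_second_moment_general hp.1.ne' hε' hr f f

end PartialObs
end
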